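/- Let G be a finite group and α an automorphism of G with α³ = id. If |{x ∈ G : x x^α x^{α²} = 1}| > (15/16)|G|, then x x^α x^{α²} = 1 for all x ∈ G. Consequently c₃ ≤ 15/16 < 1, where c₃ = sup({|X_{3,φ}(H)|/|H| : H finite, φ ∈ Aut(H), φ³ = id} \ {1}). -/

import Mathlib

/-!
In the semidirect product `G ⋊ ⟨α⟩` the condition `x * α x * (α ^ 2) x = 1` says that `xα` has
trivial cube.  So consider a coset `C` of a normal subgroup `N`, with cyclic quotient generated by
`C`, in which all but less than one eighth of the elements have trivial cube: any eight injective
self-maps of `C` take a common point to eight elements with trivial cube.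

If `c`, `xc` and `x⁻¹c` have trivial cube then `x` commutes with its conjugates by `c` and `c⁻¹`,
and choosing `c` well one finds that every `x ∈ N` commutes with all its conjugates.  The normal
closure `A` of `x` is then abelian, and `(xc)³ = (1 + c + c²)x · c³` for `c ∈ C`, where `A` is
written additively and `c` acts on it by conjugation.  By Levi's argument for 2-Engel groups, the
operators `g - 1` with `g ∈ N` square to zero and anticommute, and the product of any two is killed
by `3`.  Hence the norm `1 + t + t²` of `t ∈ C` satisfies two relations with the norms of other
elements of `C`; the latter can be chosen to kill `x`, and the relations become `2D = 0` and
`3D = 0` for `D = (1 + t + t²)x`.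
-/

namespace CThree

open scoped commutatorElement IsMulCommutative

section Abundance

variable {X : Type*} {C S : Set X}

/-- `S` is `k`-abundant in `C` if any `k` injective self-maps of `C` take some point of `C`
simultaneously into `S`.  For finite `C` this holds when `S` misses less than one `k`-th of `C`. -/
def IsAbundant (k : ℕ) (C S : Set X) : Prop :=
  ∀ l : List (X → X), l.length ≤ k → (∀ F ∈ l, Set.InjOn F C ∧ Set.MapsTo F C C) →
    ∃ c ∈ C, ∀ F ∈ l, F c ∈ S

lemma ncard_exists_apply_notMem_le (hC : C.Finite) (l : List (X → X))
    (hl : ∀ F ∈ l, Set.InjOn F C ∧ Set.MapsTo F C C) :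
    {c ∈ C | ∃ F ∈ l, F c ∉ S}.ncard ≤ l.length * (C \ S).ncard := by
  induction l with
  | nil => simp
  | cons F l ih =>
    rw [List.forall_mem_cons] at hl
    have head_le : {c ∈ C | F c ∉ S}.ncard ≤ (C \ S).ncard :=
      Set.ncard_le_ncard_of_injOn F (fun c hc ↦ ⟨hl.1.2 hc.1, hc.2⟩)
        (hl.1.1.mono fun c hc ↦ hc.1) hC.sdiff
    have split : {c ∈ C | ∃ F' ∈ F :: l, F' c ∉ S} =
        {c ∈ C | F c ∉ S} ∪ {c ∈ C | ∃ F' ∈ l, F' c ∉ S} := by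
      ext c
      simp only [List.exists_mem_cons_iff, Set.mem_ofPred_eq, Set.mem_union, and_or_left]
    rw [split, List.length_cons, add_one_mul, add_comm]
    exact (Set.ncard_union_le _ _).trans (Nat.add_le_add head_le (ih hl.2))

lemma IsAbundant.of_mul_ncard_sdiff_lt {k : ℕ} (hC : C.Finite) (h : k * (C \ S).ncard < C.ncard) :
    IsAbundant k C S := by
  intro l hlk hl
  by_contra! hbad
  have hall : {c ∈ C | ∃ F ∈ l, F c ∉ S} = C := Set.sep_eq_self_iff_mem_true.mpr hbad
  have hle := ncard_exists_apply_notMem_le (S := S) hC l hl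
  rw [hall] at hle
  exact (hle.trans (Nat.mul_le_mul_right _ hlk)).not_gt h

end Abundance

section Conjugates

variable {H : Type*} [Group H] {x c g : H}

/-- The element `x` commutes with all its conjugates.  When every element of a group has this
property the group is called 2-Engel. -/
def CommutesWithConjugates (x : H) : Prop :=
  ∀ g, Commute x (g * x * g⁻¹)

lemma commute_conj_conj_iff {a b : H} :
    Commute (a * x * a⁻¹) (b * x * b⁻¹) ↔ Commute x (a⁻¹ * b * x * (a⁻¹ * b)⁻¹) := by
  rw [← Commute.conj_iff a (a := x)]
  group

lemma commute_conj_inv_iff : Commute x (g⁻¹ * x * g⁻¹⁻¹) ↔ Commute x (g * x * g⁻¹) := by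
  rw [← Commute.conj_iff g, Commute.symm_iff]
  group

lemma mul_pow_three (x c : H) :
    (x * c) ^ 3 = x * (c * x * c⁻¹) * (c * c * x * (c * c)⁻¹) * c ^ 3 := by
  simp only [pow_succ, pow_zero, one_mul]
  group

lemma mul_conj_mul_inv_conj (hc : c ^ 3 = 1) (hxc : (x * c) ^ 3 = 1) :
    x * (c * x * c⁻¹) * (c⁻¹ * x * c) = 1 := by
  have hcc : c * c = c⁻¹ := eq_inv_of_mul_eq_one_left (by rw [← hc, pow_succ, pow_two])
  simpa only [mul_pow_three, hc, mul_one, hcc, inv_inv] using hxc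

lemma commute_conj_of_pow_three (hc : c ^ 3 = 1) (hxc : (x * c) ^ 3 = 1)
    (hxc' : (x⁻¹ * c) ^ 3 = 1) : Commute x (c * x * c⁻¹) := by
  have hx : c⁻¹ * x * c = (x * (c * x * c⁻¹))⁻¹ :=
    eq_inv_of_mul_eq_one_right (mul_conj_mul_inv_conj hc hxc)
  have hx' : c⁻¹ * x⁻¹ * c = (x⁻¹ * (c * x⁻¹ * c⁻¹))⁻¹ :=
    eq_inv_of_mul_eq_one_right (mul_conj_mul_inv_conj hc hxc')
  refine inv_injective ?_
  calc (x * (c * x * c⁻¹))⁻¹ = (c⁻¹ * x⁻¹ * c)⁻¹ := by rw [← hx]; group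
    _ = (c * x * c⁻¹ * x)⁻¹ := by rw [hx']; group

/-- Since `x`, `x ^ c` and `x ^ c⁻¹` have product one, it suffices to commute with two of them. -/
lemma commute_conj_of_mul_pow_three (hc : c ^ 3 = 1) (hxc : (x * c) ^ 3 = 1)
    (h : Commute x (c⁻¹ * g * x * (c⁻¹ * g)⁻¹)) (h' : Commute x (c * g * x * (c * g)⁻¹)) :
    Commute x (g * x * g⁻¹) := by
  have hx : x = (c * x * c⁻¹ * (c⁻¹ * x * c))⁻¹ :=
    eq_inv_of_mul_eq_one_left (by rw [← mul_assoc, mul_conj_mul_inv_conj hc hxc])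
  have h₁ : Commute (c * x * c⁻¹) (g * x * g⁻¹) := commute_conj_conj_iff.mpr h
  have h₂ : Commute (c⁻¹ * x * c) (g * x * g⁻¹) := by
    simpa only [inv_inv] using (commute_conj_conj_iff (a := c⁻¹) (b := g)).mpr (by rwa [inv_inv])
  have := (h₁.mul_left h₂).inv_left
  rwa [← hx] at this

end Conjugates

section KernelEngel

variable {H Q : Type*} [Group H] [Group Q] {π : H →* Q} {q : Q} {x g : H}

lemma commute_conj_of_map_eq_one (hS : IsAbundant 8 (π ⁻¹' {q}) {c | c ^ 3 = 1})
    (hx : π x = 1) (hg : π g = 1) : Commute x (g * x * g⁻¹) := by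
  obtain ⟨c, -, hc⟩ := hS
    [fun c ↦ c, fun c ↦ x * c,
      fun c ↦ g⁻¹ * c, fun c ↦ x * (g⁻¹ * c), fun c ↦ x⁻¹ * (g⁻¹ * c),
      fun c ↦ c * g, fun c ↦ x * (c * g), fun c ↦ x⁻¹ * (c * g)] le_rfl
    (by simp +contextual [Set.InjOn, Set.MapsTo, hx, hg])
  simp only [List.forall_mem_cons, List.not_mem_nil, Set.mem_ofPred_eq] at hc
  obtain ⟨hc, hxc, hgc, hxgc, hxgc', hcg, hxcg, hxcg', -⟩ := hc
  refine commute_conj_of_mul_pow_three hc hxc ?_ (commute_conj_of_pow_three hcg hxcg hxcg')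
  rw [← commute_conj_inv_iff, mul_inv_rev, inv_inv]
  exact commute_conj_of_pow_three hgc hxgc hxgc'

lemma commute_conj_of_map_eq_inv (hS : IsAbundant 8 (π ⁻¹' {q}) {c | c ^ 3 = 1})
    (hq : q⁻¹ * q⁻¹ = q) (hx : π x = 1) (hg : π g = q⁻¹) : Commute x (g * x * g⁻¹) := by
  obtain ⟨c, hcq, hc⟩ := hS
    [fun c ↦ c, fun c ↦ x * c,
      fun c ↦ c⁻¹ * g, fun c ↦ x * (c⁻¹ * g), fun c ↦ x⁻¹ * (c⁻¹ * g)] (by simp)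
    (by simp +contextual [Set.InjOn, Set.MapsTo, hx, hg, hq])
  simp only [List.forall_mem_cons, List.not_mem_nil, Set.mem_ofPred_eq] at hc
  obtain ⟨hc, hxc, hcg, hxcg, hxcg', -⟩ := hc
  have hcg_ker : π (c * g) = 1 := by rw [map_mul, hcq, hg, mul_inv_cancel]
  exact commute_conj_of_mul_pow_three hc hxc (commute_conj_of_pow_three hcg hxcg hxcg')
    (commute_conj_of_map_eq_one hS hx hcg_ker)

lemma eq_one_or_eq_or_eq_inv_of_mem_zpowers (hq : q ^ 3 = 1) {r : Q}
    (hr : r ∈ Subgroup.zpowers q) : r = 1 ∨ r = q ∨ r = q⁻¹ := by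
  obtain ⟨k, rfl⟩ := Subgroup.mem_zpowers_iff.mp hr
  have hq3 : q ^ (3 : ℤ) = 1 := by exact_mod_cast hq
  have hq2 : q ^ (2 : ℤ) = q⁻¹ := eq_inv_of_mul_eq_one_left (by rw [← zpow_add_one, ← hq3]; rfl)
  rw [zpow_eq_zpow_emod k hq3]
  obtain h | h | h : k % 3 = 0 ∨ k % 3 = 1 ∨ k % 3 = 2 := by lia
  all_goals simp [h, hq2]

lemma commutesWithConjugates_of_mem_ker (hS : IsAbundant 8 (π ⁻¹' {q}) {c | c ^ 3 = 1})
    (hq : q ^ 3 = 1) (hπ : ∀ g, π g ∈ Subgroup.zpowers q) (hx : x ∈ π.ker) :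
    CommutesWithConjugates x := by
  have hq' : q⁻¹ * q⁻¹ = q := by
    rw [← mul_inv_rev, inv_eq_iff_mul_eq_one, ← hq, pow_succ, pow_two]
  intro g
  rcases eq_one_or_eq_or_eq_inv_of_mem_zpowers hq (hπ g) with hg | hg | hg
  · exact commute_conj_of_map_eq_one hS hx hg
  · rw [← commute_conj_inv_iff]
    exact commute_conj_of_map_eq_inv hS hq' hx (by rw [map_inv, hg])
  · exact commute_conj_of_map_eq_inv hS hq' hx hg

end KernelEngel

lemma eq_zero_of_two_nsmul_of_three_nsmul {M : Type*} [AddGroup M] {m : M} (h2 : 2 • m = 0)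
    (h3 : 3 • m = 0) : m = 0 := by
  rwa [succ_nsmul, h2, zero_add] at h3

section SquareZero

variable {R : Type*} [Ring R] {a b : R}

lemma mul_mul_eq_zero_of_mul_self (ha : a * a = 0) (hb : b * b = 0)
    (hab : (a + b + a * b) * (a + b + a * b) = 0) : a * b * a = 0 := by
  have haba : a * b * a * (1 + b) = 0 := by
    calc a * b * a * (1 + b)
        = a * ((a + b + a * b) * (a + b + a * b)) - a * a * (a + b + a * b + b * (a + b + a * b))
          - a * (b * b) := by noncomm_ring
      _ = 0 := by simp only [hab, ha, hb, mul_zero, zero_mul, sub_zero]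
  calc a * b * a = a * b * a * (1 + b) * (1 - b) + a * b * a * (b * b) := by noncomm_ring
    _ = 0 := by simp only [haba, hb, mul_zero, zero_mul, add_zero]

lemma mul_eq_neg_mul_of_mul_self (ha : a * a = 0) (hb : b * b = 0)
    (hab : (a + b + a * b) * (a + b + a * b) = 0) (haba : a * b * a = 0) (hbab : b * a * b = 0) :
    a * b = -(b * a) := by
  rw [eq_neg_iff_add_eq_zero]
  calc a * b + b * a
      = (a + b + a * b) * (a + b + a * b) - a * a - b * b - a * a * b - a * (b * b)
        - a * b * a * (1 + b) - b * a * b := by noncomm_ring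
    _ = 0 := by simp only [hab, ha, hb, haba, hbab, mul_zero, zero_mul, sub_zero]

end SquareZero

section Representation

variable {H R : Type*} [Group H] [Ring R] (ρ : H →* R)

/-- The image `ρ g - 1` of the augmentation element `g - 1` of the group ring; on an abelian normal
subgroup acted on by conjugation it is the operator `u ↦ ⁅g, u⁆`. -/
def subOne (g : H) : R :=
  ρ g - 1

/-- The image of `1 + c + c ^ 2` in a representation: the norm of the cyclic group generated by `c`
when `c ^ 3 = 1`.  For the conjugation action, `u * c` has the same cube as `c` if and only if the
norm of `c` kills `u`. -/
def cyclicNorm (c : H) : R :=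
  1 + ρ c + ρ c * ρ c

lemma eq_one_add_subOne (g : H) : ρ g = 1 + subOne ρ g :=
  (add_sub_cancel _ _).symm

lemma subOne_mul (g h : H) :
    subOne ρ (g * h) = subOne ρ g + subOne ρ h + subOne ρ g * subOne ρ h := by
  simp only [subOne, map_mul]
  noncomm_ring

variable {ρ}

lemma cyclicNorm_mul {h t : H} (horth : subOne ρ h * subOne ρ (t * h * t⁻¹) = 0) :
    cyclicNorm ρ (h * t) = cyclicNorm ρ t + subOne ρ h * ρ t
      + (subOne ρ h + subOne ρ (t * h * t⁻¹)) * (ρ t * ρ t) := by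
  have hsq_eq : ρ (h * t) * ρ (h * t) = ρ (h * (t * h * t⁻¹)) * (ρ t * ρ t) := by
    simp only [← map_mul]
    group
  rw [cyclicNorm, hsq_eq, map_mul ρ h t, eq_one_add_subOne ρ (h * _), subOne_mul, horth,
    eq_one_add_subOne ρ h, cyclicNorm]
  noncomm_ring

variable {N : Subgroup H} (hsq : ∀ n ∈ N, subOne ρ n * subOne ρ n = 0) {g h k t : H}

section
include hsq

lemma subOne_mul_mul_eq_zero (hg : g ∈ N) (hh : h ∈ N) :
    subOne ρ g * subOne ρ h * subOne ρ g = 0 :=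
  mul_mul_eq_zero_of_mul_self (hsq g hg) (hsq h hh)
    (by rw [← subOne_mul]; exact hsq _ (mul_mem hg hh))

lemma subOne_mul_eq_neg (hg : g ∈ N) (hh : h ∈ N) :
    subOne ρ g * subOne ρ h = -(subOne ρ h * subOne ρ g) :=
  mul_eq_neg_mul_of_mul_self (hsq g hg) (hsq h hh)
    (by rw [← subOne_mul]; exact hsq _ (mul_mem hg hh))
    (subOne_mul_mul_eq_zero hsq hg hh) (subOne_mul_mul_eq_zero hsq hh hg)

lemma subOne_inv (hg : g ∈ N) : subOne ρ g⁻¹ = -subOne ρ g := by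
  have hinv : ρ g * (1 - subOne ρ g) = 1 := by
    calc ρ g * (1 - subOne ρ g) = 1 - subOne ρ g * subOne ρ g := by
          rw [eq_one_add_subOne]; noncomm_ring
      _ = 1 := by rw [hsq g hg, sub_zero]
  have hg_inv : ρ g⁻¹ = 1 - subOne ρ g :=
    left_inv_eq_right_inv (by rw [← map_mul, inv_mul_cancel, map_one]) hinv
  rw [subOne, hg_inv, sub_sub_cancel_left]

lemma subOne_commutator (hg : g ∈ N) (hh : h ∈ N) :
    subOne ρ ⁅g, h⁆ = 2 • (subOne ρ g * subOne ρ h) := by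
  have hghg := subOne_mul_mul_eq_zero hsq hg hh
  have hhgh := subOne_mul_mul_eq_zero hsq hh hg
  have hanti := subOne_mul_eq_neg hsq hh hg
  simp only [commutatorElement_def, subOne_mul, subOne_inv hsq hg, subOne_inv hsq hh]
  generalize hag : subOne ρ g = a at *
  generalize hbh : subOne ρ h = b at *
  have haa : a * a = 0 := hag ▸ hsq g hg
  have hbb : b * b = 0 := hbh ▸ hsq h hh
  calc a + b + a * b + -a + (a + b + a * b) * -a + -b
        + (a + b + a * b + -a + (a + b + a * b) * -a) * -b
      = a * b - b * a - a * a - b * b + a * a * b - a * (b * b) - a * b * a + b * a * b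
        + a * b * a * b := by noncomm_ring
    _ = a * b - b * a := by
      simp only [haa, hbb, hghg, hhgh, mul_zero, zero_mul, sub_zero, add_zero]
    _ = 2 • (a * b) := by rw [hanti, sub_neg_eq_add, two_nsmul]

end

variable [N.Normal] (horth : ∀ n ∈ N, subOne ρ n * subOne ρ (t * n * t⁻¹) = 0)

section
include horth

/-- Up to terms killed by `3`, the norm `cyclicNorm ρ (h * t)` is affine in `h`. -/
lemma three_nsmul_cyclicNorm_mul_mul (h3 : ∀ m ∈ N, ∀ n ∈ N, 3 • (subOne ρ m * subOne ρ n) = 0)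
    (hh : h ∈ N) (hk : k ∈ N) :
    3 • cyclicNorm ρ t =
      3 • (cyclicNorm ρ (h * t) + cyclicNorm ρ (k * t) - cyclicNorm ρ (h * k * t)) := by
  have hconj : ∀ n ∈ N, t * n * t⁻¹ ∈ N := fun n hn ↦ Subgroup.Normal.conj_mem ‹_› n hn t
  have hconj_mul : t * (h * k) * t⁻¹ = t * h * t⁻¹ * (t * k * t⁻¹) := by group
  have hhk := h3 h hh k hk
  have hhk' := h3 _ (hconj h hh) _ (hconj k hk)
  rw [cyclicNorm_mul (horth h hh), cyclicNorm_mul (horth k hk),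
    cyclicNorm_mul (horth _ (mul_mem hh hk)), hconj_mul, subOne_mul ρ h, subOne_mul ρ (t * h * t⁻¹)]
  generalize subOne ρ (t * h * t⁻¹) = a' at *
  generalize subOne ρ (t * k * t⁻¹) = b' at *
  generalize subOne ρ h = a at *
  generalize subOne ρ k = b at *
  calc 3 • cyclicNorm ρ t
      = 3 • cyclicNorm ρ t - 3 • (a * b) * ρ t - (3 • (a * b) + 3 • (a' * b')) * (ρ t * ρ t) := by
        rw [hhk, hhk']; simp only [zero_mul, add_zero, sub_zero]
    _ = _ := by noncomm_ring

include hsq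

lemma cyclicNorm_mul_add_cyclicNorm_inv_mul (hh : h ∈ N) :
    cyclicNorm ρ (h * t) + cyclicNorm ρ (h⁻¹ * t) = 2 • cyclicNorm ρ t := by
  have hconj_inv : t * h⁻¹ * t⁻¹ = (t * h * t⁻¹)⁻¹ := by group
  have hconj : t * h * t⁻¹ ∈ N := Subgroup.Normal.conj_mem ‹_› h hh t
  rw [cyclicNorm_mul (horth h hh), cyclicNorm_mul (horth _ (inv_mem hh)), hconj_inv,
    subOne_inv hsq hh, subOne_inv hsq hconj]
  noncomm_ring

lemma cyclicNorm_smul_eq_zero_of_mul {M : Type*} [AddCommGroup M] [Module R M]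
    (h3 : ∀ m ∈ N, ∀ n ∈ N, 3 • (subOne ρ m * subOne ρ n) = 0) (hh : h ∈ N) (hk : k ∈ N) {u : M}
    (h_mul : cyclicNorm ρ (h * t) • u = 0) (h_inv_mul : cyclicNorm ρ (h⁻¹ * t) • u = 0)
    (k_mul : cyclicNorm ρ (k * t) • u = 0) (hk_mul : cyclicNorm ρ (h * k * t) • u = 0) :
    cyclicNorm ρ t • u = 0 := by
  refine eq_zero_of_two_nsmul_of_three_nsmul ?_ ?_
  · rw [← smul_assoc, ← cyclicNorm_mul_add_cyclicNorm_inv_mul hsq horth hh, add_smul, h_mul,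
      h_inv_mul, add_zero]
  · rw [← smul_assoc, three_nsmul_cyclicNorm_mul_mul horth h3 hh hk, smul_assoc, sub_smul,
      add_smul, h_mul, k_mul, hk_mul, add_zero, sub_zero, smul_zero]

end
end Representation

section ConjugationAction

variable {H : Type*} [Group H] (A : Subgroup H) [A.Normal] [IsMulCommutative A]

/-- The conjugation action of `H` on an abelian normal subgroup `A`, with `A` written additively
so that sums and differences of the operators make sense. -/
def conjEnd : H →* AddMonoid.End (Additive A) :=
  (monoidEndToAdditive A : Monoid.End A →* AddMonoid.End (Additive A)).comp
    ((MulDistribMulAction.toMonoidEnd (MulAut A) A).comp MulAut.conjNormal)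

lemma coe_subOne_conjEnd (g : H) (u : Additive A) :
    ((subOne (conjEnd A) g u).toMul : H) = ⁅g, (u.toMul : H)⁆ :=
  div_eq_mul_inv (g * u.toMul * g⁻¹) (u.toMul : H)

lemma coe_subOne_conjEnd_mul (g h : H) (u : Additive A) :
    (((subOne (conjEnd A) g * subOne (conjEnd A) h) u).toMul : H) = ⁅g, ⁅h, (u.toMul : H)⁆⁆ := by
  rw [← coe_subOne_conjEnd, ← coe_subOne_conjEnd]
  rfl

lemma mul_pow_three_eq_cyclicNorm_conjEnd_mul (c : H) (u : Additive A) :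
    ((u.toMul : H) * c) ^ 3 = (cyclicNorm (conjEnd A) c u).toMul * c ^ 3 := by
  rw [mul_pow_three, cyclicNorm, ← map_mul]
  rfl

lemma cyclicNorm_conjEnd_apply_eq_zero (u : Additive A) {c : H} (hc : c ^ 3 = 1)
    (huc : ((u.toMul : H) * c) ^ 3 = 1) : cyclicNorm (conjEnd A) c u = 0 := by
  rw [mul_pow_three_eq_cyclicNorm_conjEnd_mul, hc, mul_one] at huc
  exact Additive.toMul.injective (Subtype.ext huc)

end ConjugationAction

section Engel

variable {H : Type*} [Group H]

lemma isMulCommutative_normalClosure {x : H} (hx : CommutesWithConjugates x) :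
    IsMulCommutative (Subgroup.normalClosure {x}) := by
  refine Subgroup.isMulCommutative_closure fun a ha b hb ↦ ?_
  simp only [Group.mem_conjugatesOfSet_iff, Set.mem_singleton_iff, exists_eq_left,
    isConj_iff] at ha hb
  obtain ⟨g, rfl⟩ := ha
  obtain ⟨h, rfl⟩ := hb
  exact commute_conj_conj_iff.mpr (hx _)

variable {A N : Subgroup H} [A.Normal] [IsMulCommutative A] {g h t x : H}

lemma subOne_conjEnd_mul_self (hg : CommutesWithConjugates g) :
    subOne (conjEnd A) g * subOne (conjEnd A) g = 0 := by
  ext u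
  have hu : ⁅g, (u.toMul : H)⁆ = g * (u.toMul * g * (u.toMul : H)⁻¹)⁻¹ := by
    rw [commutatorElement_def]; group
  rw [coe_subOne_conjEnd_mul, hu]
  exact ((Commute.refl g).mul_right (hg _).inv_right).commutator_eq

lemma commutator_inv_right (hx : CommutesWithConjugates x) : ⁅g, x⁻¹⁆ = ⁅g, x⁆⁻¹ := by
  rw [commutatorElement_def, commutatorElement_def, mul_inv_rev, inv_inv, (hx g).inv_right.eq]
  group

variable (hN : ∀ y ∈ N, CommutesWithConjugates y)
include hN

lemma commutator_commutator_eq_inv (hg : g ∈ N) (hh : h ∈ N) (hx : x ∈ N) :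
    ⁅g, ⁅h, x⁆⁆ = ⁅h, ⁅g, x⁆⁆⁻¹ := by
  have := isMulCommutative_normalClosure (hN x hx)
  let A := Subgroup.normalClosure {x}
  let v : Additive A := .ofMul ⟨x, Subgroup.subset_normalClosure rfl⟩
  have key := congrArg (fun F ↦ ((F v).toMul : H))
    (subOne_mul_eq_neg (ρ := conjEnd A) (fun n hn ↦ subOne_conjEnd_mul_self (hN n hn)) hg hh)
  change ⁅g, ⁅h, (v.toMul : H)⁆⁆ = ⁅h, ⁅g, (v.toMul : H)⁆⁆⁻¹
  rw [← coe_subOne_conjEnd_mul, ← coe_subOne_conjEnd_mul]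
  exact key

lemma commutator_commutator_left_eq_pow_two (hg : g ∈ N) (hh : h ∈ N) (hx : x ∈ N) :
    ⁅⁅g, h⁆, x⁆ = ⁅g, ⁅h, x⁆⁆ ^ 2 := by
  have := isMulCommutative_normalClosure (hN x hx)
  let A := Subgroup.normalClosure {x}
  let v : Additive A := .ofMul ⟨x, Subgroup.subset_normalClosure rfl⟩
  have key := congrArg (fun F ↦ ((F v).toMul : H))
    (subOne_commutator (ρ := conjEnd A) (fun n hn ↦ subOne_conjEnd_mul_self (hN n hn)) hg hh)
  change ⁅⁅g, h⁆, (v.toMul : H)⁆ = ⁅g, ⁅h, (v.toMul : H)⁆⁆ ^ 2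
  rw [← coe_subOne_conjEnd_mul, ← coe_subOne_conjEnd]
  exact key

/-- Levi's argument: `⁅⁅g, h⁆, x⁆` is the square of `⁅g, ⁅h, x⁆⁆` and, by antisymmetry, also its
inverse. -/
lemma commutator_commutator_pow_three (hg : g ∈ N) (hh : h ∈ N) (hx : x ∈ N) :
    ⁅g, ⁅h, x⁆⁆ ^ 3 = 1 := by
  have hxh : ⁅x, h⁆ ∈ N := N.commutator_le_self (Subgroup.commutator_mem_commutator hx hh)
  have h_inv : ⁅⁅g, h⁆, x⁆ = ⁅g, ⁅h, x⁆⁆⁻¹ := by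
    rw [← commutatorElement_inv x, commutator_commutator_eq_inv hN hx hg hh, inv_inv,
      ← commutatorElement_inv x h, commutator_inv_right (hN _ hxh), inv_inv]
  rw [pow_succ, ← commutator_commutator_left_eq_pow_two hN hg hh hx, h_inv, inv_mul_cancel]

lemma three_nsmul_subOne_conjEnd_mul (hA : A ≤ N) (hg : g ∈ N) (hh : h ∈ N) :
    3 • (subOne (conjEnd A) g * subOne (conjEnd A) h) = 0 := by
  ext u
  have hu := commutator_commutator_pow_three hN hg hh (hA u.toMul.2)
  rw [← coe_subOne_conjEnd_mul] at hu
  exact hu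

lemma subOne_conjEnd_mul_conj [N.Normal] (hA : A ≤ N) (hg : g ∈ N) (t : H) :
    subOne (conjEnd A) g * subOne (conjEnd A) (t * g * t⁻¹) = 0 := by
  have hconj : t * g * t⁻¹ ∈ N := Subgroup.Normal.conj_mem ‹_› g hg t
  have hcomm : Commute (subOne (conjEnd A) g) (subOne (conjEnd A) (t * g * t⁻¹)) :=
    (((hN g hg t).map (conjEnd A)).sub_left (Commute.one_left _)).sub_right (Commute.one_right _)
  have hanti := subOne_mul_eq_neg (ρ := conjEnd A)
    (fun n hn ↦ subOne_conjEnd_mul_self (hN n hn)) hg hconj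
  refine eq_zero_of_two_nsmul_of_three_nsmul ?_ (three_nsmul_subOne_conjEnd_mul hN hA hg hconj)
  rw [two_nsmul]
  nth_rw 1 [hanti]
  rw [hcomm.eq, neg_add_cancel]

lemma cyclicNorm_conjEnd_apply_eq_zero_of_mul [N.Normal] (hA : A ≤ N) {k : H} (hh : h ∈ N)
    (hk : k ∈ N) {u : Additive A} (h_mul : cyclicNorm (conjEnd A) (h * t) u = 0)
    (h_inv_mul : cyclicNorm (conjEnd A) (h⁻¹ * t) u = 0)
    (k_mul : cyclicNorm (conjEnd A) (k * t) u = 0)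
    (hk_mul : cyclicNorm (conjEnd A) (h * k * t) u = 0) : cyclicNorm (conjEnd A) t u = 0 :=
  cyclicNorm_smul_eq_zero_of_mul (fun n hn ↦ subOne_conjEnd_mul_self (hN n hn))
    (fun _ hn ↦ subOne_conjEnd_mul_conj hN hA hn t)
    (fun _ hm _ hn ↦ three_nsmul_subOne_conjEnd_mul hN hA hm hn) hh hk h_mul h_inv_mul k_mul hk_mul

end Engel

section Cosets

variable {H Q : Type*} [Group H] [Group Q] {π : H →* Q} {q : Q} {x c t : H}

lemma mul_pow_three_eq_one_of_mem_ker (hS : IsAbundant 8 (π ⁻¹' {q}) {c | c ^ 3 = 1})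
    (hker : ∀ y ∈ π.ker, CommutesWithConjugates y) (hx : x ∈ π.ker) (ht : π t = q)
    (ht3 : t ^ 3 = 1) : (x * t) ^ 3 = 1 := by
  have := isMulCommutative_normalClosure (hker x hx)
  let A := Subgroup.normalClosure {x}
  have hA : A ≤ π.ker := Subgroup.normalClosure_le_normal (Set.singleton_subset_iff.mpr hx)
  let v : Additive A := .ofMul ⟨x, Subgroup.subset_normalClosure rfl⟩
  have hx1 : π x = 1 := hx
  have norm_eq_zero : ∀ {c : H}, c ^ 3 = 1 → (x * c) ^ 3 = 1 → cyclicNorm (conjEnd A) c v = 0 :=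
    cyclicNorm_conjEnd_apply_eq_zero A v
  -- With `h = c * t⁻¹` and `k = d * t⁻¹`, the norms of `c = h * t`, `t * c⁻¹ * t = h⁻¹ * t`,
  -- `d = k * t` and `c * t⁻¹ * d = h * k * t` kill `x`.
  obtain ⟨c, hcq, hc⟩ := hS
    [fun c ↦ c, fun c ↦ x * c, fun c ↦ t * c⁻¹ * t, fun c ↦ x * (t * c⁻¹ * t)] (by simp)
    (by simp +contextual [Set.InjOn, Set.MapsTo, hx1, ht])
  obtain ⟨d, hdq, hd⟩ := hS
    [fun d ↦ d, fun d ↦ x * d, fun d ↦ c * t⁻¹ * d, fun d ↦ x * (c * t⁻¹ * d)] (by simp)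
    (by simp +contextual [Set.InjOn, Set.MapsTo, hx1, ht, show π c = q from hcq])
  simp only [List.forall_mem_cons, List.not_mem_nil, Set.mem_ofPred_eq] at hc hd
  obtain ⟨hc, hxc, htct, hxtct, -⟩ := hc
  obtain ⟨hd, hxd, hctd, hxctd, -⟩ := hd
  have mem_ker : ∀ {y : H}, π y = q → y * t⁻¹ ∈ π.ker := fun hy ↦ by
    rw [MonoidHom.mem_ker, map_mul, hy, map_inv, ht, mul_inv_cancel]
  have norm_t : cyclicNorm (conjEnd A) t v = 0 := by
    refine cyclicNorm_conjEnd_apply_eq_zero_of_mul hker hA (mem_ker hcq) (mem_ker hdq) ?_ ?_ ?_ ?_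
    · simpa only [inv_mul_cancel_right] using norm_eq_zero hc hxc
    · simpa only [mul_inv_rev, inv_inv] using norm_eq_zero htct hxtct
    · simpa only [inv_mul_cancel_right] using norm_eq_zero hd hxd
    · simpa only [← mul_assoc, inv_mul_cancel_right] using norm_eq_zero hctd hxctd
  change ((v.toMul : H) * t) ^ 3 = 1
  rw [mul_pow_three_eq_cyclicNorm_conjEnd_mul, norm_t, ht3, mul_one]
  rfl

theorem pow_three_eq_one_of_isAbundant (hS : IsAbundant 8 (π ⁻¹' {q}) {c | c ^ 3 = 1})
    (hπ : ∀ g, π g ∈ Subgroup.zpowers q) (hc : π c = q) : c ^ 3 = 1 := by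
  obtain ⟨t, htq, ht⟩ := hS [fun c ↦ c] (by simp) (by simp [Set.InjOn, Set.MapsTo])
  simp only [List.forall_mem_cons, List.not_mem_nil, Set.mem_ofPred_eq] at ht
  have hq : q ^ 3 = 1 := by rw [← show π t = q from htq, ← map_pow, ht.1, map_one]
  have hx : c * t⁻¹ ∈ π.ker := by
    rw [MonoidHom.mem_ker, map_mul, hc, map_inv, show π t = q from htq, mul_inv_cancel]
  rw [← inv_mul_cancel_right c t]
  exact mul_pow_three_eq_one_of_mem_ker hS
    (fun y hy ↦ commutesWithConjugates_of_mem_ker hS hq hπ hy) hx htq ht.1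

end Cosets

section Automorphism

variable {G : Type*} [Group G] {α : MulAut G} {x : G}

/-- The set `X_{3,α}(G)`.  When `α ^ 3 = 1`, its elements `x` are those for which `xα` has trivial
cube in `G ⋊ ⟨α⟩`. -/
def twistedCubeSet (α : MulAut G) : Set G :=
  {x | x * α x * (α ^ 2) x = 1}

lemma pow_three_apply_of_mem_twistedCubeSet (hx : x ∈ twistedCubeSet α) : (α ^ 3) x = x := by
  have hx' : α x * (α ^ 2) x * (α ^ 3) x = 1 := by
    simpa only [map_mul, map_one, pow_succ', pow_zero, mul_one, MulAut.mul_apply] using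
      congrArg α hx
  refine (left_inv_eq_right_inv ?_ hx').symm
  rw [← mul_assoc]
  exact hx

variable (α) in
/-- The automorphism `α` as an element of the cyclic group acting in `G ⋊ ⟨α⟩`. -/
def zpowersGen : Subgroup.zpowers α :=
  ⟨α, Subgroup.mem_zpowers α⟩

lemma mk_zpowersGen_pow_three_eq_one_iff (hα : α ^ 3 = 1) :
    (⟨x, zpowersGen α⟩ : G ⋊[(Subgroup.zpowers α).subtype] Subgroup.zpowers α) ^ 3 = 1 ↔
      x ∈ twistedCubeSet α := by
  have hgen : zpowersGen α * zpowersGen α * zpowersGen α = 1 := Subtype.ext hα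
  rw [SemidirectProduct.ext_iff]
  simp only [pow_succ, pow_zero, one_mul, SemidirectProduct.mul_left,
    SemidirectProduct.mul_right, SemidirectProduct.one_left, SemidirectProduct.one_right, hgen,
    and_true]
  rfl

variable [Finite G]

lemma eq_top_of_card_lt_two_mul {K : Subgroup G} (h : Nat.card G < 2 * Nat.card K) : K = ⊤ := by
  rw [← K.card_mul_index, mul_comm 2] at h
  have hlt : K.index < 2 := lt_of_mul_lt_mul_left' h
  exact Subgroup.index_eq_one.mp (by have := K.index_ne_zero_of_finite; lia)

lemma pow_three_eq_one_of_card_lt (h : Nat.card G < 2 * (twistedCubeSet α).ncard) :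
    α ^ 3 = 1 := by
  let fixed : Subgroup G := (α ^ 3).toMonoidHom.eqLocus (MonoidHom.id G)
  have hle : (twistedCubeSet α).ncard ≤ Nat.card fixed :=
    Set.ncard_le_ncard (fun x hx ↦ pow_three_apply_of_mem_twistedCubeSet hx) (Set.toFinite _)
  have htop : fixed = ⊤ := eq_top_of_card_lt_two_mul (by lia)
  ext x
  exact (htop ▸ Subgroup.mem_top x : x ∈ fixed)

lemma isAbundant_preimage_zpowersGen (hα : α ^ 3 = 1)
    (h : 7 * Nat.card G < 8 * (twistedCubeSet α).ncard) :
    IsAbundant 8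
      ((SemidirectProduct.rightHom : G ⋊[(Subgroup.zpowers α).subtype] Subgroup.zpowers α →* _) ⁻¹'
        {zpowersGen α}) {c | c ^ 3 = 1} := by
  let ι : G → G ⋊[(Subgroup.zpowers α).subtype] Subgroup.zpowers α := fun x ↦ ⟨x, zpowersGen α⟩
  have hι : Function.Injective ι := fun x y hxy ↦ congrArg SemidirectProduct.left hxy
  have hfiber : SemidirectProduct.rightHom ⁻¹' {zpowersGen α} = Set.range ι := by
    refine Set.Subset.antisymm (fun c hc ↦ ⟨c.left, SemidirectProduct.ext rfl hc.symm⟩) ?_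
    rintro _ ⟨x, rfl⟩
    rfl
  have hbad : Set.range ι \ {c | c ^ 3 = 1} = ι '' (twistedCubeSet α)ᶜ := by
    ext c
    constructor
    · rintro ⟨⟨x, rfl⟩, hx⟩
      exact ⟨x, fun h ↦ hx ((mk_zpowersGen_pow_three_eq_one_iff hα).mpr h), rfl⟩
    · rintro ⟨x, hx, rfl⟩
      exact ⟨⟨x, rfl⟩, fun h ↦ hx ((mk_zpowersGen_pow_three_eq_one_iff hα).mp h)⟩
  rw [hfiber]
  refine .of_mul_ncard_sdiff_lt (Set.finite_range ι) ?_
  have hcompl := Set.ncard_add_ncard_compl (twistedCubeSet α)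
  rw [hbad, Set.ncard_image_of_injective _ hι, Set.ncard_range_of_injective hι]
  lia

theorem mem_twistedCubeSet_of_card_lt (h : 7 * Nat.card G < 8 * (twistedCubeSet α).ncard) (x : G) :
    x ∈ twistedCubeSet α := by
  have hα : α ^ 3 = 1 := pow_three_eq_one_of_card_lt (by lia)
  have hgen : ∀ b, b ∈ Subgroup.zpowers (zpowersGen α) := by
    rintro ⟨_, k, rfl⟩
    exact ⟨k, Subtype.ext (Subgroup.coe_zpow _ _ _)⟩
  exact (mk_zpowersGen_pow_three_eq_one_iff hα).mp <|
    pow_three_eq_one_of_isAbundant (isAbundant_preimage_zpowersGen hα h) (fun _ ↦ hgen _) rfl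

end Automorphism

end CThree

theorem c_three_le_fifteen_sixteenths_general {G : Type*} [Group G] [Finite G] (α : MulAut G) :
    ((7 / 8 : ℝ) * Nat.card G < (Nat.card {x : G | x * α x * (α ^ 2) x = 1} : ℝ) →
      ∀ x : G, x * α x * (α ^ 2) x = 1) ∧
    ((Nat.card {x : G | x * α x * (α ^ 2) x = 1} : ℝ) / Nat.card G ≠ 1 →
      (Nat.card {x : G | x * α x * (α ^ 2) x = 1} : ℝ) / Nat.card G ≤ 7 / 8) := by
  have hcard : (0 : ℝ) < Nat.card G := by exact_mod_cast Nat.card_pos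
  have hall : (7 / 8 : ℝ) * Nat.card G < (Nat.card {x : G | x * α x * (α ^ 2) x = 1} : ℝ) →
      ∀ x : G, x * α x * (α ^ 2) x = 1 := fun h ↦
    CThree.mem_twistedCubeSet_of_card_lt <| by
      have : (7 * Nat.card G : ℝ) < 8 * (Nat.card {x : G | x * α x * (α ^ 2) x = 1} : ℝ) := by
        linarith
      exact_mod_cast this
  refine ⟨hall, fun hne ↦ ?_⟩
  contrapose! hne
  have huniv : {x : G | x * α x * (α ^ 2) x = 1} = Set.univ :=
    Set.eq_univ_of_forall (hall ((lt_div_iff₀ hcard).mp hne))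
  rw [huniv, Nat.card_congr (Equiv.Set.univ G), div_self hcard.ne']

/-- (a) For every finite group `G` and automorphism `α` with `α ^ 3 = 1`,
if `|{x : x * x^α * x^{α²} = 1}| > (15/16) * |G|` then `x * x^α * x^{α²} = 1` for all
`x ∈ G`.  (b) Consequently every ratio `|X_{3,φ}(H)| / |H|` different from `1` is at
most `15/16`, i.e. `c₃ ≤ 15/16`, and (c) `15/16 < 1`, so `c₃ < 1`. -/
theorem c_three_le_fifteen_sixteenths :
    (∀ (G : Type) [Group G] [Fintype G] (α : MulAut G), α ^ 3 = 1 →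
      (15 / 16 : ℝ) * Nat.card G <
        (Nat.card {x : G | x * α x * (α ^ 2) x = 1} : ℝ) →
      ∀ x : G, x * α x * (α ^ 2) x = 1) ∧
    (∀ (H : Type) [Group H] [Fintype H] (φ : MulAut H), φ ^ 3 = 1 →
      (Nat.card {x : H | x * φ x * (φ ^ 2) x = 1} : ℝ) / Nat.card H ≠ 1 →
      (Nat.card {x : H | x * φ x * (φ ^ 2) x = 1} : ℝ) / Nat.card H ≤ 15 / 16) ∧
    (15 / 16 : ℝ) < 1 :=
  ⟨fun _ _ _ α _ h ↦ (c_three_le_fifteen_sixteenths_general α).1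
      ((mul_le_mul_of_nonneg_right (by norm_num) (Nat.cast_nonneg _)).trans_lt h),
    fun _ _ _ φ _ h ↦ ((c_three_le_fifteen_sixteenths_general φ).2 h).trans (by norm_num),
    by norm_num⟩
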